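/- Let G be a one-sided complete-observation turn-based stochastic game satisfying interaction separation with uniform-n-ary probabilistic states (as in the context), let f : A₁ → ZMod n and g : A₂ → ZMod n be surjective, and let (G', φ') be the derandomized game and objective obtained from (G, φ). Then for every measurable objective φ ⊆ S^ω and every state s ∈ S: player 1 has an observation-based almost-sure winning strategy for φ from s in G if and only if player 1 has an observation-based almost-sure winning strategy for φ' from s in G'; and player 1 has an observation-based positive winning strategy for φ from s in G if and only if player 1 has an observation-based positive winning strategy for φ' from s in G'. -/

import Mathlib

open MeasureTheory
open scoped ENNReal

namespace Stmt6

/-- Type of a state: player-1 state, player-2 state, or probabilistic state. -/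
inductive Turn : Type
  | p1 : Turn
  | p2 : Turn
  | prob : Turn
deriving DecidableEq

variable {S A₁ A₂ O : Type}

/-- The cylinder set of infinite plays extending the finite prefix `l`. -/
def Cyl {α : Type} (l : List α) : Set (ℕ → α) := {ρ | ∀ i : Fin l.length, ρ i.1 = l.get i}

/-- Probability of observing the successive states `rest` after the history `hist ++ [cur]`,
given the one-step transition probability `step`. -/
noncomputable def listProb {α : Type} (step : List α → α → α → ℝ≥0∞) :
    List α → α → List α → ℝ≥0∞
  | _, _, [] => 1
  | hist, cur, s' :: rest => step hist cur s' * listProb step (hist ++ [cur]) s' rest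

/-- One-step transition probability of the turn-based game `G`: at player-1 states the
action of player 1 (drawn from `σ`) determines the successor via `δ₁`, at player-2 states
the action of player 2 (drawn from `π`) determines it via `δ₂`, and at probabilistic
states with successor tuple `succ cur : ZMod n → S` each successor is reached with
probability `#{k | succ cur k = next}/n` (independently of the actions). -/
noncomputable def stepG [DecidableEq S] [Fintype A₁] [Fintype A₂] (n : ℕ) [NeZero n]
    (turn : S → Turn) (δ₁ : S → A₁ → S) (δ₂ : S → A₂ → S) (succ : S → ZMod n → S)
    (σ : List S → PMF A₁) (π : List S → PMF A₂)
    (hist : List S) (cur next : S) : ℝ≥0∞ :=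
  match turn cur with
  | Turn.p1 => ∑' a, σ (hist ++ [cur]) a * (if δ₁ cur a = next then 1 else 0)
  | Turn.p2 => ∑' b, π (hist ++ [cur]) b * (if δ₂ cur b = next then 1 else 0)
  | Turn.prob =>
      ((Finset.univ.filter fun k : ZMod n => succ cur k = next).card : ℝ≥0∞) / (n : ℝ≥0∞)

/-- `Pr` is the family of Ionescu–Tulcea play measures of the game with one-step
transition probabilities `step σ π`. -/
def IsPlayMeasure {α : Type} [MeasurableSpace α]
    (step : (List α → PMF A₁) → (List α → PMF A₂) → List α → α → α → ℝ≥0∞)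
    (Pr : α → (List α → PMF A₁) → (List α → PMF A₂) → Measure (ℕ → α)) : Prop :=
  (∀ s σ π, IsProbabilityMeasure (Pr s σ π)) ∧
    ∀ s σ π (l : List α), Pr s σ π (Cyl (s :: l)) = listProb (step σ π) [] s l

/-- An observation-based strategy only depends on the observation sequence. -/
def ObsBased {α A O : Type} (obs : α → O) (σ : List α → PMF A) : Prop :=
  ∀ h h' : List α, h.map obs = h'.map obs → σ h = σ h'

/-- State space of the derandomized game `G'`. -/
abbrev S' (S : Type) (n : ℕ) : Type := S ⊕ S × ZMod n

/-- Turn function of `G'`: probabilistic states of `G` become player-2 states, and the new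
states `(s, i)` are player-1 states. -/
def turn' (turn : S → Turn) {n : ℕ} : S' S n → Turn
  | Sum.inl s => match turn s with
    | Turn.prob => Turn.p2
    | t => t
  | Sum.inr _ => Turn.p1

/-- Player-1 transitions of `G'`: unchanged on `S₁`; from `(s, i)` the action `a` leads to
the entry of the successor tuple of `s` at index `i + f a`. -/
def delta₁' (δ₁ : S → A₁ → S) {n : ℕ} (succ : S → ZMod n → S) (f : A₁ → ZMod n) :
    S' S n → A₁ → S' S n
  | Sum.inl s, a => Sum.inl (δ₁ s a)
  | Sum.inr (s, i), a => Sum.inl (succ s (i + f a))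

/-- Player-2 transitions of `G'`: unchanged on `S₂`; from a probabilistic state `s` of `G`
the action `b` leads to `(s, g b)`. -/
def delta₂' [DecidableEq Turn] (turn : S → Turn) (δ₂ : S → A₂ → S) {n : ℕ}
    (g : A₂ → ZMod n) : S' S n → A₂ → S' S n
  | Sum.inl s, b => if turn s = Turn.prob then Sum.inr (s, g b) else Sum.inl (δ₂ s b)
  | Sum.inr (s, i), _ => Sum.inr (s, i)

/-- One-step transition probability of the (deterministic) derandomized game `G'`. -/
noncomputable def stepG' [DecidableEq S] [Fintype A₁] [Fintype A₂] (n : ℕ) [NeZero n]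
    (turn : S → Turn) (δ₁ : S → A₁ → S) (δ₂ : S → A₂ → S) (succ : S → ZMod n → S)
    (f : A₁ → ZMod n) (g : A₂ → ZMod n)
    (σ : List (S' S n) → PMF A₁) (π : List (S' S n) → PMF A₂)
    (hist : List (S' S n)) (cur next : S' S n) : ℝ≥0∞ :=
  match turn' turn cur with
  | Turn.p1 => ∑' a, σ (hist ++ [cur]) a *
      (if delta₁' δ₁ succ f cur a = next then 1 else 0)
  | Turn.p2 => ∑' b, π (hist ++ [cur]) b *
      (if delta₂' turn δ₂ g cur b = next then 1 else 0)
  | Turn.prob => 0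

/-- Projection of `G'`-states to `G`-states. -/
def unbar {n : ℕ} : S' S n → S
  | Sum.inl s => s
  | Sum.inr (s, _) => s

/-- Observation map of `G'`: `(s, i)` is observed like `s`. -/
def obs' (obs₁ : S → O) {n : ℕ} : S' S n → O := fun s => obs₁ (unbar s)

/-- The derandomized objective `φ'`: the subsequence of states in `S` (i.e. not in
`S_P × ZMod n`) is infinite and belongs to `φ`. -/
def phi' {n : ℕ} (φ : Set (ℕ → S)) : Set (ℕ → S' S n) :=
  {ρ | {m | (ρ m).isLeft = true}.Infinite ∧
    (fun k => unbar (ρ (Nat.nth (fun m => (ρ m).isLeft = true) k))) ∈ φ}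

/-!
Interaction separation makes player states and probabilistic states alternate, so in a play of `G'`
the states that deletion retains sit at positions depending only on the type of the initial state,
and player 1 always knows whether the current state is retained.

In the round that replaces a probabilistic state `x`, the successor of `x` has index `g b + f a`,
where `a` and `b` are the actions of the two players. Player 1 observes `(x, i)` as `x`, so the
choices of `a` and `b` are independent, and the index is uniform on `ZMod n` as soon as `f a` or
`g b` is. Each player can therefore enforce the distribution of `G` alone: player 1 to transfer a
winning strategy from `G` to `G'`, and player 2 to transfer one from `G'` to `G`.

A strategy `π'` of player 2 in `G'` may use the indices that `G` does not see. Averaging `π'` over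
the lifts of a history of `G`, weighted by their probabilities, gives a strategy in `G`. In both
directions deletion then pushes the play measure of `G'` forward to a play measure of `G`, since
both have the same transition probabilities on cylinders, and hence `φ'` and `φ` have the same
probability.
-/

section Histories

variable {α β : Type}

/-- The history of a play `ρ` before time `m`, i.e. its first `m` states. -/
def history (m : ℕ) (ρ : ℕ → α) : List α := (List.range m).map ρ

@[simp]
lemma length_history (m : ℕ) (ρ : ℕ → α) : (history m ρ).length = m := by simp [history]

lemma history_succ (m : ℕ) (ρ : ℕ → α) : history (m + 1) ρ = history m ρ ++ [ρ m] := by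
  simp [history, List.range_succ]

lemma map_history (F : α → β) (m : ℕ) (ρ : ℕ → α) :
    (history m ρ).map F = history m (fun i => F (ρ i)) := by
  simp [history, Function.comp_def]

lemma history_inj {m m' : ℕ} {ρ ρ' : ℕ → α} :
    history m ρ = history m' ρ' ↔ m = m' ∧ ∀ i < m, ρ i = ρ' i := by
  refine ⟨fun h => ?_, ?_⟩
  · obtain rfl : m = m' := by simpa using congrArg List.length h
    simpa [history] using h
  · rintro ⟨rfl, h⟩
    simpa [history] using h

lemma history_succ_eq_append_singleton {m : ℕ} {ρ : ℕ → α} {u : List α} {x : α} :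
    history (m + 1) ρ = u ++ [x] ↔ history m ρ = u ∧ ρ m = x := by
  simp [history_succ, List.append_singleton_inj]

lemma mem_Cyl_iff {l : List α} {ρ : ℕ → α} : ρ ∈ Cyl l ↔ history l.length ρ = l := by
  rw [List.ext_get_iff]
  simp [Cyl, history, Fin.forall_iff]

lemma mem_Cyl_history_iff {m : ℕ} {ρ ρ' : ℕ → α} :
    ρ' ∈ Cyl (history m ρ) ↔ ∀ i < m, ρ' i = ρ i := by
  simp [mem_Cyl_iff, history_inj]

lemma Cyl_nil : Cyl ([] : List α) = Set.univ := by
  ext ρ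
  simp [Cyl]

lemma Cyl_append_singleton (l : List α) (y : α) :
    Cyl (l ++ [y]) = Cyl l ∩ {ρ | ρ l.length = y} := by
  ext ρ
  simp only [Set.mem_inter_iff, mem_Cyl_iff, List.length_append, List.length_singleton,
    history_succ_eq_append_singleton, Set.mem_ofPred_eq]

lemma disjoint_Cyl {l l' : List α} (hlen : l.length = l'.length) (hne : l ≠ l') :
    Disjoint (Cyl l) (Cyl l') := by
  refine Set.disjoint_left.2 fun ρ h h' => hne ?_
  rw [mem_Cyl_iff] at h h'
  rw [← h, ← h', hlen]

lemma Cyl_subset_Cyl {l l' : List α} (hlen : l.length ≤ l'.length)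
    (hne : (Cyl l ∩ Cyl l').Nonempty) : Cyl l' ⊆ Cyl l := by
  obtain ⟨ρ, h, h'⟩ := hne
  rw [mem_Cyl_iff] at h h'
  rw [← h, ← h']
  simp only [Set.subset_def, mem_Cyl_history_iff]
  exact fun ρ' hρ' i hi => hρ' i (hi.trans_le hlen)

lemma isPiSystem_range_Cyl : IsPiSystem (Set.range (Cyl : List α → Set (ℕ → α))) := by
  rintro _ ⟨l, rfl⟩ _ ⟨l', rfl⟩ hne
  rcases le_total l.length l'.length with hlen | hlen
  · exact ⟨l', (Set.inter_eq_right.2 (Cyl_subset_Cyl hlen hne)).symm⟩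
  · exact ⟨l, (Set.inter_eq_left.2 (Cyl_subset_Cyl hlen (Set.inter_comm _ _ ▸ hne))).symm⟩

lemma eval_eq_iUnion_Cyl (m : ℕ) (y : α) :
    {ρ : ℕ → α | ρ m = y} = ⋃ l : {l : List α // l.length = m}, Cyl (l.1 ++ [y]) := by
  ext ρ
  simp only [Set.mem_ofPred_eq, Set.mem_iUnion, Cyl_append_singleton, Set.mem_inter_iff]
  refine ⟨fun h => ⟨⟨history m ρ, by simp⟩, by simp [mem_Cyl_history_iff], by simpa⟩, ?_⟩
  rintro ⟨⟨l, rfl⟩, -, h⟩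
  exact h

variable [MeasurableSpace α] [DiscreteMeasurableSpace α]

lemma measurableSet_eval_eq (m : ℕ) (y : α) : MeasurableSet {ρ : ℕ → α | ρ m = y} :=
  (measurable_pi_apply m : Measurable fun ρ : ℕ → α => ρ m) (measurableSet_singleton y)

lemma measurableSet_Cyl (l : List α) : MeasurableSet (Cyl l) := by
  rw [Cyl, Set.ofPred_forall]
  exact MeasurableSet.iInter fun i => measurableSet_eval_eq _ _

lemma generateFrom_range_Cyl [Countable α] :
    MeasurableSpace.generateFrom (Set.range (Cyl : List α → Set (ℕ → α))) =
      MeasurableSpace.pi := by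
  refine le_antisymm (MeasurableSpace.generateFrom_le ?_) (iSup_le fun m => ?_)
  · rintro _ ⟨l, rfl⟩
    exact measurableSet_Cyl l
  · refine Measurable.comap_le (@measurable_to_countable' _ _ _ _ (.generateFrom _) _ fun y => ?_)
    change MeasurableSet[.generateFrom _] {ρ : ℕ → α | ρ m = y}
    rw [eval_eq_iUnion_Cyl]
    exact MeasurableSet.iUnion fun l => MeasurableSpace.measurableSet_generateFrom ⟨_, rfl⟩

lemma ext_of_Cyl [Countable α] {P Q : Measure (ℕ → α)} [IsFiniteMeasure P]
    (h : ∀ l, P (Cyl l) = Q (Cyl l)) : P = Q := by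
  refine ext_of_generate_finite _ generateFrom_range_Cyl.symm isPiSystem_range_Cyl ?_ ?_
  · rintro _ ⟨l, rfl⟩
    exact h l
  · simpa [Cyl_nil] using h []

end Histories

section PlayMeasure

variable {α : Type}

lemma listProb_append_singleton {step : List α → α → α → ℝ≥0∞} {l u : List α} {s c : α} (y : α)
    (h : List α) (hl : s :: l = u ++ [c]) :
    listProb step h s (l ++ [y]) = listProb step h s l * step (h ++ u) c y := by
  induction l generalizing h s u with
  | nil =>
    obtain ⟨rfl, rfl⟩ : u = [] ∧ s = c := by cases u <;> simp_all
    simp [listProb]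
  | cons a l ih =>
    obtain ⟨u, rfl, hu⟩ : ∃ u', u = s :: u' ∧ a :: l = u' ++ [c] := by cases u <;> simp_all
    simp [listProb, ih (h ++ [s]) hu, mul_assoc]

variable [MeasurableSpace α]

/-- `P` is the Ionescu–Tulcea play measure from the initial state `s` with one-step transition
probabilities `step`: the defining property of the measures in `IsPlayMeasure`, for fixed
strategies and a fixed initial state. -/
def IsPlayMeasureFrom (step : List α → α → α → ℝ≥0∞) (s : α) (P : Measure (ℕ → α)) : Prop :=
  IsProbabilityMeasure P ∧ ∀ l, P (Cyl (s :: l)) = listProb step [] s l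

lemma IsPlayMeasure.from
    {step : (List α → PMF A₁) → (List α → PMF A₂) → List α → α → α → ℝ≥0∞}
    {Pr : α → (List α → PMF A₁) → (List α → PMF A₂) → Measure (ℕ → α)}
    (hPr : IsPlayMeasure step Pr) (s : α) (σ : List α → PMF A₁) (π : List α → PMF A₂) :
    IsPlayMeasureFrom (step σ π) s (Pr s σ π) :=
  ⟨hPr.1 s σ π, hPr.2 s σ π⟩

variable {step : List α → α → α → ℝ≥0∞} {s : α} {P Q : Measure (ℕ → α)}

lemma IsPlayMeasureFrom.of_append [IsProbabilityMeasure P] (hs : P (Cyl [s]) = 1)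
    (h : ∀ u c y, P (Cyl (u ++ [c] ++ [y])) = P (Cyl (u ++ [c])) * step u c y) :
    IsPlayMeasureFrom step s P := by
  refine ⟨inferInstance, fun l => ?_⟩
  induction l using List.reverseRecOn with
  | nil => simpa [listProb] using hs
  | append_singleton l y ih =>
    obtain ⟨u, c, hu⟩ : ∃ u c, s :: l = u ++ [c] :=
      ⟨_, _, (List.dropLast_append_getLast (List.cons_ne_nil s l)).symm⟩
    rw [listProb_append_singleton y [] hu, ← ih, ← List.cons_append, hu, h, List.nil_append]

variable [DiscreteMeasurableSpace α]

lemma IsPlayMeasureFrom.apply_Cyl_cons_of_ne (hP : IsPlayMeasureFrom step s P) {a : α}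
    (ha : a ≠ s) (l : List α) : P (Cyl (a :: l)) = 0 := by
  have := hP.1
  have hs : P (Cyl [s]) = 1 := by simpa [listProb] using hP.2 []
  refine measure_mono_null (fun ρ hρ => ?_) ((prob_compl_eq_zero_iff (measurableSet_Cyl [s])).2 hs)
  intro hρs
  exact ha ((hρ ⟨0, by simp⟩).symm.trans (hρs ⟨0, by simp⟩))

lemma IsPlayMeasureFrom.apply_Cyl_append (hP : IsPlayMeasureFrom step s P) (u : List α)
    (c y : α) : P (Cyl (u ++ [c] ++ [y])) = P (Cyl (u ++ [c])) * step u c y := by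
  obtain ⟨a, l, hl⟩ : ∃ a l, u ++ [c] = a :: l := List.exists_cons_of_ne_nil (by simp)
  rw [hl, List.cons_append]
  rcases eq_or_ne a s with rfl | ha
  · rw [hP.2, hP.2, listProb_append_singleton y [] hl.symm, List.nil_append]
  · simp [hP.apply_Cyl_cons_of_ne ha]

variable [Countable α]

lemma IsPlayMeasureFrom.unique (hP : IsPlayMeasureFrom step s P)
    (hQ : IsPlayMeasureFrom step s Q) : P = Q := by
  have := hP.1
  have := hQ.1
  refine ext_of_Cyl fun l => ?_
  cases l with
  | nil => simp [Cyl_nil]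
  | cons a l =>
    rcases eq_or_ne a s with rfl | ha
    · rw [hP.2, hQ.2]
    · rw [hP.apply_Cyl_cons_of_ne ha, hQ.apply_Cyl_cons_of_ne ha]

lemma IsPlayMeasureFrom.apply_Cyl_inter_two_steps (hP : IsPlayMeasureFrom step s P) (u : List α)
    (c y : α) :
    P (Cyl (u ++ [c]) ∩ {ρ | ρ (u.length + 2) = y}) =
      P (Cyl (u ++ [c])) * ∑' z, step u c z * step (u ++ [c]) z y := by
  have hunion : Cyl (u ++ [c]) ∩ {ρ | ρ (u.length + 2) = y} =
      ⋃ z, Cyl (u ++ [c] ++ [z] ++ [y]) := by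
    ext ρ
    simp [-List.append_assoc, Cyl_append_singleton _ y, Cyl_append_singleton (u ++ [c])]
  rw [hunion, measure_iUnion _ fun z => measurableSet_Cyl _]
  · simp only [hP.apply_Cyl_append, mul_assoc, ENNReal.tsum_mul_left]
  · exact fun z z' hne => disjoint_Cyl (by simp) (by simpa using hne)

lemma IsPlayMeasureFrom.ae_zero_eq (hP : IsPlayMeasureFrom step s P) : ∀ᵐ ρ ∂P, ρ 0 = s := by
  have hunion : {ρ : ℕ → α | ¬ ρ 0 = s} = ⋃ a : {a // a ≠ s}, Cyl [a.1] := by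
    ext ρ
    simp [Cyl]
  rw [ae_iff, hunion, measure_iUnion_null_iff]
  exact fun a => hP.apply_Cyl_cons_of_ne a.2 []

lemma IsPlayMeasureFrom.ae_step_ne_zero (hP : IsPlayMeasureFrom step s P) :
    ∀ᵐ ρ ∂P, ∀ m, step (history m ρ) (ρ m) (ρ (m + 1)) ≠ 0 := by
  refine ae_all_iff.2 fun m => ?_
  have hnull : ∀ u c y, step u c y = 0 → P (Cyl (u ++ [c] ++ [y])) = 0 := fun u c y h => by
    rw [hP.apply_Cyl_append, h, mul_zero]
  refine measure_mono_null (fun ρ hρ => ?_) (measure_iUnion_null fun u =>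
    measure_iUnion_null fun c => measure_iUnion_null fun y => measure_iUnion_null (hnull u c y))
  simp only [Set.mem_iUnion]
  refine ⟨history m ρ, ρ m, ρ (m + 1), not_not.1 hρ, ?_⟩
  rw [← history_succ, ← history_succ]
  exact mem_Cyl_history_iff.2 fun i _ => rfl

end PlayMeasure

section ProbabilityMassFunctions

variable {A B : Type}

lemma map_apply_eq_tsum_mul_ite [DecidableEq B] (p : PMF A) (d : A → B) (b : B) :
    p.map d b = ∑' a, p a * (if d a = b then 1 else 0) := by
  rw [PMF.map_apply]
  refine tsum_congr fun a => ?_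
  by_cases h : d a = b <;> simp [h, Ne.symm]

lemma map_comp_apply_of_injective {C : Type} (p : PMF A) (d : A → B) {e : B → C}
    (he : Function.Injective e) (b : B) : p.map (e ∘ d) (e b) = p.map d b := by
  classical
  simp only [map_apply_eq_tsum_mul_ite, Function.comp_apply, he.eq_iff]

lemma tsum_map_mul (p : PMF A) (d : A → B) (F : B → ℝ≥0∞) :
    ∑' b, p.map d b * F b = ∑' a, p a * F (d a) := by
  classical
  simp only [PMF.map_apply, ← ENNReal.tsum_mul_right]
  rw [ENNReal.tsum_comm]
  refine tsum_congr fun a => ?_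
  rw [tsum_eq_single (d a) (by simp +contextual)]
  simp

lemma exists_pmf_mixture [Nonempty A] {ι : Type} (w : ι → ℝ≥0∞) (hw : ∑' i, w i ≠ ∞)
    (p : ι → PMF A) :
    ∃ q : PMF A, ∀ (d : A → B) (y : B),
      ∑' i, w i * (p i).map d y = (∑' i, w i) * q.map d y := by
  rcases eq_or_ne (∑' i, w i) 0 with h0 | h0
  · refine ⟨PMF.pure (Classical.arbitrary A), fun d y => ?_⟩
    simp [ENNReal.tsum_eq_zero.1 h0]
  · refine ⟨(PMF.normalize w h0 hw).bind p, fun d y => ?_⟩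
    rw [PMF.map_bind, PMF.bind_apply, ← ENNReal.tsum_mul_left]
    refine tsum_congr fun i => ?_
    rw [PMF.normalize_apply, ← mul_assoc, mul_left_comm, ENNReal.mul_inv_cancel h0 hw, mul_one]

lemma map_uniformOfFintype_equiv [Fintype A] [Nonempty A] [Fintype B] [Nonempty B] (e : A ≃ B) :
    (PMF.uniformOfFintype A).map e = PMF.uniformOfFintype B := by
  classical
  ext b
  rw [PMF.map_apply, tsum_eq_single (e.symm b)]
  · simp [Fintype.card_congr e]
  · rintro a ha
    rw [if_neg]
    rintro rfl
    simp at ha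

variable {Z : Type} [Fintype Z] [Nonempty Z]

/-- The law of an action whose image under the surjection `f` is uniform on `Z`: it is carried by
a section of `f`. -/
noncomputable def uniformAction {f : A → Z} (hf : Function.Surjective f) : PMF A :=
  (PMF.uniformOfFintype Z).map (Function.surjInv hf)

lemma map_uniformAction {f : A → Z} (hf : Function.Surjective f) :
    (uniformAction hf).map f = PMF.uniformOfFintype Z := by
  rw [uniformAction, PMF.map_comp, (Function.rightInverse_surjInv hf).id, PMF.map_id]

lemma map_add_left_uniformAction [AddGroup Z] {f : A → Z} (hf : Function.Surjective f)
    (F : Z → B) (i : Z) :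
    (uniformAction hf).map (fun a => F (i + f a)) = (PMF.uniformOfFintype Z).map F := by
  rw [← map_uniformOfFintype_equiv (Equiv.addLeft i), ← map_uniformAction hf, PMF.map_comp,
    PMF.map_comp]
  rfl

lemma map_add_right_uniformAction [AddGroup Z] {f : A → Z} (hf : Function.Surjective f)
    (F : Z → B) (i : Z) :
    (uniformAction hf).map (fun a => F (f a + i)) = (PMF.uniformOfFintype Z).map F := by
  rw [← map_uniformOfFintype_equiv (Equiv.addRight i), ← map_uniformAction hf, PMF.map_comp,
    PMF.map_comp]
  rfl

lemma bind_map_add_uniformAction [AddGroup Z] {A' : Type} {f : A → Z}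
    (hf : Function.Surjective f) (q : PMF A') (f' : A' → Z) (F : Z → B) :
    ((uniformAction hf).bind fun a => q.map fun a' => F (f a + f' a')) =
      (PMF.uniformOfFintype Z).map F := by
  have hswap : ((uniformAction hf).bind fun a => q.map fun a' => F (f a + f' a')) =
      q.bind fun a' => (uniformAction hf).map fun a => F (f a + f' a') :=
    PMF.bind_comm _ q fun a a' => PMF.pure (F (f a + f' a'))
  simp only [hswap, map_add_right_uniformAction hf, PMF.bind_const]

end ProbabilityMassFunctions

section Steps

variable [DecidableEq S] [Fintype A₁] [Fintype A₂] {n : ℕ} [NeZero n] {turn : S → Turn}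
  {δ₁ : S → A₁ → S} {δ₂ : S → A₂ → S} {succ : S → ZMod n → S}

lemma stepG_p1 (σ : List S → PMF A₁) (π : List S → PMF A₂) (h : List S) {x : S}
    (hx : turn x = Turn.p1) (y : S) :
    stepG n turn δ₁ δ₂ succ σ π h x y = (σ (h ++ [x])).map (δ₁ x) y := by
  simp only [stepG, hx, map_apply_eq_tsum_mul_ite]

lemma stepG_p2 (σ : List S → PMF A₁) (π : List S → PMF A₂) (h : List S) {x : S}
    (hx : turn x = Turn.p2) (y : S) :
    stepG n turn δ₁ δ₂ succ σ π h x y = (π (h ++ [x])).map (δ₂ x) y := by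
  simp only [stepG, hx, map_apply_eq_tsum_mul_ite]

lemma stepG_prob (σ : List S → PMF A₁) (π : List S → PMF A₂) (h : List S) {x : S}
    (hx : turn x = Turn.prob) (y : S) :
    stepG n turn δ₁ δ₂ succ σ π h x y =
      (PMF.uniformOfFintype (ZMod n)).map (succ x) y := by
  simp [stepG, hx, PMF.map_apply, tsum_fintype, Finset.sum_ite, ZMod.card, div_eq_mul_inv,
    eq_comm]

variable {f : A₁ → ZMod n} {g : A₂ → ZMod n}

lemma stepG'_of_turn'_eq_p1 (σ : List (S' S n) → PMF A₁) (π : List (S' S n) → PMF A₂)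
    (h : List (S' S n)) {x : S' S n} (hx : turn' turn x = Turn.p1) (y : S' S n) :
    stepG' n turn δ₁ δ₂ succ f g σ π h x y = (σ (h ++ [x])).map (delta₁' δ₁ succ f x) y := by
  simp only [stepG', hx, map_apply_eq_tsum_mul_ite]

lemma stepG'_of_turn'_eq_p2 (σ : List (S' S n) → PMF A₁) (π : List (S' S n) → PMF A₂)
    (h : List (S' S n)) {x : S' S n} (hx : turn' turn x = Turn.p2) (y : S' S n) :
    stepG' n turn δ₁ δ₂ succ f g σ π h x y = (π (h ++ [x])).map (delta₂' turn δ₂ g x) y := by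
  simp only [stepG', hx, map_apply_eq_tsum_mul_ite]

end Steps

section Positions

/-- The position, in a play of the derandomized game, of the `k`-th state that deletion retains.
Every round at a probabilistic state is followed by one deleted state; probabilistic and player
states alternate, the former occurring at the times `k` with `k + c` odd, where `c` is the `phase`
of the initial state. -/
def retainedPos (c k : ℕ) : ℕ := k + (k + c) / 2

/-- The parity shift of a play from `s`: its `k`-th state is probabilistic iff `k + c` is odd. -/
def phase (turn : S → Turn) (s : S) : ℕ := if turn s = Turn.prob then 1 else 0

lemma phase_le_one (turn : S → Turn) (s : S) : phase turn s ≤ 1 := by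
  unfold phase
  split <;> omega

lemma retainedPos_zero {c : ℕ} (hc : c ≤ 1) : retainedPos c 0 = 0 := by
  unfold retainedPos
  omega

lemma retainedPos_succ_of_even {c k : ℕ} (h : Even (k + c)) :
    retainedPos c (k + 1) = retainedPos c k + 1 := by
  rw [Nat.even_iff] at h
  unfold retainedPos
  omega

lemma retainedPos_succ_of_odd {c k : ℕ} (h : Odd (k + c)) :
    retainedPos c (k + 1) = retainedPos c k + 2 := by
  rw [Nat.odd_iff] at h
  unfold retainedPos
  omega

lemma retainedPos_strictMono (c : ℕ) : StrictMono (retainedPos c) :=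
  strictMono_nat_of_lt_succ fun k => by unfold retainedPos; omega

lemma retainedPos_add_one_ne {c k : ℕ} (h : Odd (k + c)) (j : ℕ) :
    retainedPos c j ≠ retainedPos c k + 1 := by
  rw [Nat.odd_iff] at h
  unfold retainedPos
  omega

lemma exists_eq_retainedPos_or {c : ℕ} (hc : c ≤ 1) (m : ℕ) :
    ∃ k, m = retainedPos c k ∨ Odd (k + c) ∧ m = retainedPos c k + 1 := by
  induction m with
  | zero => exact ⟨0, .inl (retainedPos_zero hc).symm⟩
  | succ m ih =>
    obtain ⟨k, rfl | ⟨hodd, rfl⟩⟩ := ih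
    · rcases Nat.even_or_odd (k + c) with heven | hodd
      · exact ⟨k + 1, .inl (retainedPos_succ_of_even heven).symm⟩
      · exact ⟨k, .inr ⟨hodd, rfl⟩⟩
    · exact ⟨k + 1, .inl (retainedPos_succ_of_odd hodd).symm⟩

/-- The play of the original game obtained from the play `ρ` of the derandomized game by keeping
only the states at the positions `retainedPos c`. -/
def retained {n : ℕ} (c : ℕ) (ρ : ℕ → S' S n) (k : ℕ) : S := unbar (ρ (retainedPos c k))

end Positions

section LegalPlays

variable {n : ℕ} {turn : S → Turn} {ρ : ℕ → S' S n} {s : S}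

/-- The moves of the derandomized game that respect interaction separation. The state `(x, i)`
can only be entered from the probabilistic state `x`. -/
def LegalMove (turn : S → Turn) : S' S n → S' S n → Prop
  | .inl x, .inl y => turn x ≠ Turn.prob ∧ turn y = Turn.prob
  | .inl x, .inr z => turn x = Turn.prob ∧ z.1 = x
  | .inr z, .inl y => turn z.1 = Turn.prob → turn y ≠ Turn.prob
  | .inr _, .inr _ => False

/-- A play of the derandomized game from the initial state `s` that only makes legal moves. -/
def IsLegalPlay (turn : S → Turn) (s : S) (ρ : ℕ → S' S n) : Prop :=
  ρ 0 = .inl s ∧ ∀ m, LegalMove turn (ρ m) (ρ (m + 1))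

lemma LegalMove.exists_inl {x : S} {y : S' S n} (h : LegalMove turn (.inl x) y)
    (hx : turn x ≠ Turn.prob) : ∃ z, y = .inl z ∧ turn z = Turn.prob := by
  rcases y with z | z
  · exact ⟨z, rfl, h.2⟩
  · exact absurd h.1 hx

lemma LegalMove.exists_inr {x : S} {y : S' S n} (h : LegalMove turn (.inl x) y)
    (hx : turn x = Turn.prob) : ∃ i, y = .inr (x, i) := by
  rcases y with z | ⟨z, i⟩
  · exact absurd hx h.1
  · obtain rfl : z = x := h.2
    exact ⟨i, rfl⟩

lemma LegalMove.exists_inl_of_inr {x : S} {i : ZMod n} {y : S' S n}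
    (h : LegalMove turn (.inr (x, i)) y) (hx : turn x = Turn.prob) :
    ∃ z, y = .inl z ∧ turn z ≠ Turn.prob := by
  rcases y with z | z
  · exact ⟨z, rfl, h hx⟩
  · exact h.elim

namespace IsLegalPlay

lemma exists_retainedPos_eq (hρ : IsLegalPlay turn s ρ) (k : ℕ) :
    ∃ x, ρ (retainedPos (phase turn s) k) = .inl x ∧
      (turn x = Turn.prob ↔ Odd (k + phase turn s)) := by
  induction k with
  | zero =>
    refine ⟨s, by rw [retainedPos_zero (phase_le_one turn s), hρ.1], ?_⟩
    unfold phase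
    split <;> simp_all
  | succ k ih =>
    obtain ⟨x, hx, hturn⟩ := ih
    have hmove := hρ.2 (retainedPos (phase turn s) k)
    rw [hx] at hmove
    rw [add_right_comm, Nat.odd_add_one, ← hturn]
    by_cases hp : turn x = Turn.prob
    · rw [retainedPos_succ_of_odd (hturn.1 hp)]
      obtain ⟨i, hi⟩ := hmove.exists_inr hp
      have hmove' := hρ.2 (retainedPos (phase turn s) k + 1)
      rw [hi] at hmove'
      obtain ⟨y, hy, hyturn⟩ := hmove'.exists_inl_of_inr hp
      exact ⟨y, hy, by tauto⟩
    · rw [retainedPos_succ_of_even (Nat.not_odd_iff_even.1 (mt hturn.2 hp))]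
      obtain ⟨y, hy, hyturn⟩ := hmove.exists_inl hp
      exact ⟨y, hy, by tauto⟩

lemma apply_retainedPos (hρ : IsLegalPlay turn s ρ) (k : ℕ) :
    ρ (retainedPos (phase turn s) k) = .inl (retained (phase turn s) ρ k) := by
  obtain ⟨x, hx, -⟩ := hρ.exists_retainedPos_eq k
  simp [retained, hx, unbar]

lemma turn_retained_eq_prob_iff (hρ : IsLegalPlay turn s ρ) (k : ℕ) :
    turn (retained (phase turn s) ρ k) = Turn.prob ↔ Odd (k + phase turn s) := by
  obtain ⟨x, hx, hturn⟩ := hρ.exists_retainedPos_eq k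
  simpa [retained, hx, unbar] using hturn

lemma exists_apply_retainedPos_add_one (hρ : IsLegalPlay turn s ρ) {k : ℕ}
    (hk : Odd (k + phase turn s)) : ∃ i,
      ρ (retainedPos (phase turn s) k + 1) = .inr (retained (phase turn s) ρ k, i) := by
  have hmove := hρ.2 (retainedPos (phase turn s) k)
  rw [hρ.apply_retainedPos k] at hmove
  exact hmove.exists_inr ((hρ.turn_retained_eq_prob_iff k).2 hk)

lemma unbar_apply_retainedPos_add_one (hρ : IsLegalPlay turn s ρ) {k : ℕ}
    (hk : Odd (k + phase turn s)) :
    unbar (ρ (retainedPos (phase turn s) k + 1)) = retained (phase turn s) ρ k := by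
  obtain ⟨i, hi⟩ := hρ.exists_apply_retainedPos_add_one hk
  simp [hi, unbar]

lemma ofPred_isLeft_eq_range (hρ : IsLegalPlay turn s ρ) :
    {m | (ρ m).isLeft = true} = Set.range (retainedPos (phase turn s)) := by
  ext m
  obtain ⟨k, rfl | ⟨hodd, rfl⟩⟩ := exists_eq_retainedPos_or (phase_le_one turn s) m
  · simp [hρ.apply_retainedPos]
  · obtain ⟨i, hi⟩ := hρ.exists_apply_retainedPos_add_one hodd
    simp [hi, retainedPos_add_one_ne hodd]

lemma infinite_ofPred_isLeft (hρ : IsLegalPlay turn s ρ) : {m | (ρ m).isLeft = true}.Infinite := by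
  rw [hρ.ofPred_isLeft_eq_range]
  exact Set.infinite_range_of_injective (retainedPos_strictMono _).injective

lemma nth_isLeft (hρ : IsLegalPlay turn s ρ) :
    Nat.nth (fun m => (ρ m).isLeft = true) = retainedPos (phase turn s) :=
  ((Nat.nth_strictMono hρ.infinite_ofPred_isLeft).range_inj (retainedPos_strictMono _)).1
    ((Nat.range_nth_of_infinite hρ.infinite_ofPred_isLeft).trans hρ.ofPred_isLeft_eq_range)

lemma mem_phi'_iff (hρ : IsLegalPlay turn s ρ) (φ : Set (ℕ → S)) :
    ρ ∈ phi' φ ↔ retained (phase turn s) ρ ∈ φ := by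
  rw [phi', Set.mem_ofPred_eq, hρ.nth_isLeft]
  exact and_iff_right hρ.infinite_ofPred_isLeft

end IsLegalPlay

end LegalPlays

section Lifts

variable {n : ℕ} {turn : S → Turn} {s x : S} {h h' u : List S} {w w' : List (S' S n)}

/-- The nonempty history `w` of the derandomized game ends in a retained state, and deletion turns
it into the history `h` of the original game. -/
def IsLift (turn : S → Turn) (s : S) (h : List S) (w : List (S' S n)) : Prop :=
  ∃ ρ k, IsLegalPlay turn s ρ ∧ h = history (k + 1) (retained (phase turn s) ρ) ∧
    w = history (retainedPos (phase turn s) k + 1) ρ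

lemma exists_unbar_eq_retained (n : ℕ) (turn : S → Turn) (s : S) (m : ℕ) :
    ∃ k, retainedPos (phase turn s) k ≤ m ∧ ∀ ρ : ℕ → S' S n, IsLegalPlay turn s ρ →
      unbar (ρ m) = retained (phase turn s) ρ k := by
  obtain ⟨k, rfl | ⟨hodd, rfl⟩⟩ := exists_eq_retainedPos_or (phase_le_one turn s) m
  · exact ⟨k, le_rfl, fun ρ _ => rfl⟩
  · exact ⟨k, Nat.le_succ _, fun ρ hρ => hρ.unbar_apply_retainedPos_add_one hodd⟩

namespace IsLift

lemma map_obs_eq_iff (hw : IsLift turn s h w) (hw' : IsLift turn s h' w') (obs : S → O) :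
    w.map (obs' obs) = w'.map (obs' obs) ↔ h.map obs = h'.map obs := by
  obtain ⟨ρ, k, hρ, rfl, rfl⟩ := hw
  obtain ⟨ρ', k', hρ', rfl, rfl⟩ := hw'
  have hmono := retainedPos_strictMono (phase turn s)
  simp only [map_history, history_inj, Nat.add_right_cancel_iff, hmono.injective.eq_iff,
    Nat.lt_succ_iff]
  refine and_congr_right fun _ => ⟨fun hobs j hj => hobs _ (hmono.monotone hj), fun hobs i hi => ?_⟩
  obtain ⟨j, hji, hj⟩ := exists_unbar_eq_retained n turn s i
  simpa only [obs', hj ρ hρ, hj ρ' hρ'] using hobs j (hmono.le_iff_le.1 (hji.trans hi))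

lemma history_unique (hw : IsLift turn s h w) (hw' : IsLift turn s h' w) : h = h' := by
  simpa using (hw.map_obs_eq_iff hw' id).1 rfl

lemma exists_eq_append (hw : IsLift turn s (u ++ [x]) w) :
    ∃ v, w = v ++ [.inl x] ∧ v.length = retainedPos (phase turn s) u.length ∧
      (turn x = Turn.prob ↔ Odd (u.length + phase turn s)) := by
  obtain ⟨ρ, k, hρ, hu, rfl⟩ := hw
  obtain ⟨rfl, rfl⟩ := history_succ_eq_append_singleton.1 hu.symm
  refine ⟨history (retainedPos (phase turn s) k) ρ, ?_, by simp, ?_⟩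
  · rw [history_succ, hρ.apply_retainedPos]
  · simpa using hρ.turn_retained_eq_prob_iff k

lemma length_ne_length_add_one (hw : IsLift turn s (u ++ [x]) w) (hx : turn x = Turn.prob)
    (hw' : IsLift turn s h' w') : w'.length ≠ w.length + 1 := by
  obtain ⟨v, rfl, hv, hodd⟩ := hw.exists_eq_append
  obtain ⟨ρ, k, -, -, rfl⟩ := hw'
  simpa [hv] using retainedPos_add_one_ne (hodd.1 hx) k

lemma retained_mem_Cyl (hw : IsLift turn s h w) {ρ : ℕ → S' S n} (hρ : ρ ∈ Cyl w) :
    retained (phase turn s) ρ ∈ Cyl h := by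
  obtain ⟨ρ', k, -, rfl, rfl⟩ := hw
  rw [mem_Cyl_history_iff] at hρ ⊢
  exact fun j hj => congrArg unbar
    (hρ _ (Nat.lt_succ_of_le ((retainedPos_strictMono _).monotone (Nat.le_of_lt_succ hj))))

end IsLift

lemma pairwise_disjoint_Cyl_lift (turn : S → Turn) (s : S) (h : List S) :
    Pairwise (Function.onFun Disjoint
      fun w : {w : List (S' S n) // IsLift turn s h w} => Cyl w.1) := by
  rintro ⟨w, ρ, k, _, hh, hw⟩ ⟨w', ρ', k', _, hh', hw'⟩ hne
  obtain rfl : k = k' := by simpa using (history_inj.1 (hh.symm.trans hh')).1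
  exact disjoint_Cyl (by simp [hw, hw']) (fun hww' => hne (Subtype.ext hww'))

lemma IsLegalPlay.retained_mem_Cyl_iff {ρ : ℕ → S' S n} (hρ : IsLegalPlay turn s ρ) :
    retained (phase turn s) ρ ∈ Cyl (u ++ [x]) ↔
      ∃ w, IsLift turn s (u ++ [x]) w ∧ ρ ∈ Cyl w := by
  refine ⟨fun h => ?_, fun ⟨w, hw, h⟩ => hw.retained_mem_Cyl h⟩
  refine ⟨_, ⟨ρ, u.length, hρ, ?_, rfl⟩, mem_Cyl_history_iff.2 fun _ _ => rfl⟩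
  simpa using (mem_Cyl_iff.1 h).symm

end Lifts

section Deletion

variable {n : ℕ} [NeZero n] [MeasurableSpace S] [Countable S] [DiscreteMeasurableSpace S]
  {turn : S → Turn} {s : S} {P : Measure (ℕ → S' S n)}

instance : DiscreteMeasurableSpace (S' S n) where
  forall_measurableSet _ := measurableSet_sum_iff.2 ⟨.of_discrete, .of_discrete⟩

lemma measurable_retained (c : ℕ) : Measurable (retained c : (ℕ → S' S n) → ℕ → S) :=
  measurable_pi_lambda _ fun k =>
    (Measurable.of_discrete (f := unbar)).comp (measurable_pi_apply (retainedPos c k))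

lemma measure_phi' (hP : ∀ᵐ ρ ∂P, IsLegalPlay turn s ρ) {φ : Set (ℕ → S)}
    (hφ : MeasurableSet φ) : P (phi' φ) = P.map (retained (phase turn s)) φ := by
  rw [Measure.map_apply (measurable_retained _) hφ]
  refine measure_congr (Filter.eventuallyEq_set.2 ?_)
  filter_upwards [hP] with ρ hρ using hρ.mem_phi'_iff φ

lemma measure_retained_preimage_Cyl_inter (hP : ∀ᵐ ρ ∂P, IsLegalPlay turn s ρ) (u : List S)
    (x : S) {D : Set (ℕ → S' S n)} (hD : MeasurableSet D) :
    P (retained (phase turn s) ⁻¹' Cyl (u ++ [x]) ∩ D) =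
      ∑' w : {w // IsLift turn s (u ++ [x]) w}, P (Cyl w.1 ∩ D) := by
  have hunion : P (retained (phase turn s) ⁻¹' Cyl (u ++ [x]) ∩ D) =
      P (⋃ w : {w // IsLift turn s (u ++ [x]) w}, Cyl w.1 ∩ D) := by
    refine measure_congr (Filter.eventuallyEq_set.2 ?_)
    filter_upwards [hP] with ρ hρ
    simp [hρ.retained_mem_Cyl_iff]
  rw [hunion, measure_iUnion]
  · exact (pairwise_disjoint_Cyl_lift turn s _).mono fun _ _ h =>
      h.mono Set.inter_subset_left Set.inter_subset_left
  · exact fun w => (measurableSet_Cyl w.1).inter hD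

lemma tsum_measure_Cyl_lift_ne_top [IsFiniteMeasure P] (turn : S → Turn) (s : S) (h : List S) :
    ∑' w : {w // IsLift turn s h w}, P (Cyl w.1) ≠ ∞ :=
  ((tsum_meas_le_meas_iUnion_of_disjoint P (fun _ => measurableSet_Cyl _)
    (pairwise_disjoint_Cyl_lift turn s h)).trans_lt (measure_lt_top P _)).ne

end Deletion

section RetainedStep

/-- Interaction separation: the moves of the players lead to probabilistic states, and
probabilistic states lead to states of the players. -/
structure InteractionSeparated (turn : S → Turn) (δ₁ : S → A₁ → S) (δ₂ : S → A₂ → S) {n : ℕ}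
    (succ : S → ZMod n → S) : Prop where
  p1 : ∀ s a, turn s = Turn.p1 → turn (δ₁ s a) = Turn.prob
  p2 : ∀ s b, turn s = Turn.p2 → turn (δ₂ s b) = Turn.prob
  prob : ∀ s k, turn s = Turn.prob → turn (succ s k) ≠ Turn.prob

variable {n : ℕ} {turn : S → Turn} {δ₁ : S → A₁ → S} {δ₂ : S → A₂ → S} {succ : S → ZMod n → S}
  {f : A₁ → ZMod n} {g : A₂ → ZMod n} {s : S}

/-- The law of the next retained state of the derandomized game when the players use `σ` and `π`
and the history is `w`, a history ending in the retained state `x`. -/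
noncomputable def retainedStep (turn : S → Turn) (δ₁ : S → A₁ → S) (δ₂ : S → A₂ → S)
    (succ : S → ZMod n → S) (f : A₁ → ZMod n) (g : A₂ → ZMod n) (σ : List (S' S n) → PMF A₁)
    (π : List (S' S n) → PMF A₂) (w : List (S' S n)) (x : S) : PMF S :=
  match turn x with
  | Turn.p1 => (σ w).map (δ₁ x)
  | Turn.p2 => (π w).map (δ₂ x)
  | Turn.prob =>
      (π w).bind fun b => (σ (w ++ [.inr (x, g b)])).map fun a => succ x (g b + f a)

variable [NeZero n] [DecidableEq S] [Fintype A₁] [Fintype A₂] {σ : List (S' S n) → PMF A₁}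
  {π : List (S' S n) → PMF A₂}

lemma InteractionSeparated.legalMove (hsep : InteractionSeparated turn δ₁ δ₂ succ)
    {h : List (S' S n)} {x y : S' S n} (hstep : stepG' n turn δ₁ δ₂ succ f g σ π h x y ≠ 0) :
    LegalMove turn x y := by
  rcases x with x | ⟨x, i⟩
  · rcases hx : turn x
    · rw [stepG'_of_turn'_eq_p1 _ _ _ (by simp [turn', hx]), ← PMF.mem_support_iff,
        PMF.mem_support_map_iff] at hstep
      obtain ⟨a, -, rfl⟩ := hstep
      exact ⟨by simp [hx], hsep.p1 x a hx⟩
    · rw [stepG'_of_turn'_eq_p2 _ _ _ (by simp [turn', hx]), ← PMF.mem_support_iff,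
        PMF.mem_support_map_iff] at hstep
      obtain ⟨b, -, rfl⟩ := hstep
      simpa [delta₂', hx, LegalMove] using hsep.p2 x b hx
    · rw [stepG'_of_turn'_eq_p2 _ _ _ (by simp [turn', hx]), ← PMF.mem_support_iff,
        PMF.mem_support_map_iff] at hstep
      obtain ⟨b, -, rfl⟩ := hstep
      simp [delta₂', hx, LegalMove]
  · rw [stepG'_of_turn'_eq_p1 _ _ _ rfl, ← PMF.mem_support_iff, PMF.mem_support_map_iff] at hstep
    obtain ⟨a, -, rfl⟩ := hstep
    exact hsep.prob x _

lemma stepG'_inl_p1 (h : List (S' S n)) {x : S} (hx : turn x = Turn.p1) (y : S) :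
    stepG' n turn δ₁ δ₂ succ f g σ π h (.inl x) (.inl y) =
      (σ (h ++ [.inl x])).map (δ₁ x) y := by
  rw [stepG'_of_turn'_eq_p1 _ _ _ (by simp [turn', hx])]
  exact map_comp_apply_of_injective _ _ Sum.inl_injective y

lemma stepG'_inl_p2 (h : List (S' S n)) {x : S} (hx : turn x = Turn.p2) (y : S) :
    stepG' n turn δ₁ δ₂ succ f g σ π h (.inl x) (.inl y) =
      (π (h ++ [.inl x])).map (δ₂ x) y := by
  have hδ : delta₂' turn δ₂ g (.inl x) = Sum.inl ∘ δ₂ x := by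
    ext b
    simp [delta₂', hx]
  rw [stepG'_of_turn'_eq_p2 _ _ _ (by simp [turn', hx]), hδ,
    map_comp_apply_of_injective _ _ Sum.inl_injective]

lemma tsum_stepG'_mul_stepG'_prob (h : List (S' S n)) {x : S} (hx : turn x = Turn.prob) (y : S) :
    ∑' z, stepG' n turn δ₁ δ₂ succ f g σ π h (.inl x) z *
        stepG' n turn δ₁ δ₂ succ f g σ π (h ++ [.inl x]) z (.inl y) =
      (π (h ++ [.inl x])).bind (fun b => (σ (h ++ [.inl x] ++ [.inr (x, g b)])).map
        fun a => succ x (g b + f a)) y := by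
  simp only [stepG'_of_turn'_eq_p2 (turn := turn) (x := .inl x) σ π h (by simp [turn', hx])]
  rw [tsum_map_mul, PMF.bind_apply]
  refine tsum_congr fun b => ?_
  simp only [delta₂', hx, if_true]
  rw [stepG'_of_turn'_eq_p1 _ _ _ rfl]
  exact congrArg _ (map_comp_apply_of_injective _ _ Sum.inl_injective y)

variable [MeasurableSpace S] [Countable S] [DiscreteMeasurableSpace S] {P : Measure (ℕ → S' S n)}

lemma IsPlayMeasureFrom.ae_isLegalPlay (hsep : InteractionSeparated turn δ₁ δ₂ succ)
    (hP : IsPlayMeasureFrom (stepG' n turn δ₁ δ₂ succ f g σ π) (.inl s) P) :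
    ∀ᵐ ρ ∂P, IsLegalPlay turn s ρ := by
  filter_upwards [hP.ae_zero_eq, hP.ae_step_ne_zero] with ρ h0 hstep
  exact ⟨h0, fun m => hsep.legalMove (hstep m)⟩

lemma IsLift.measure_Cyl_inter_next {u : List S} {x : S} {w : List (S' S n)}
    (hw : IsLift turn s (u ++ [x]) w)
    (hP : IsPlayMeasureFrom (stepG' n turn δ₁ δ₂ succ f g σ π) (.inl s) P) (y : S) :
    P (Cyl w ∩ {ρ | ρ (retainedPos (phase turn s) (u.length + 1)) = .inl y}) =
      P (Cyl w) * retainedStep turn δ₁ δ₂ succ f g σ π w x y := by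
  obtain ⟨v, rfl, hv, hodd⟩ := hw.exists_eq_append
  by_cases hx : turn x = Turn.prob
  · rw [retainedPos_succ_of_odd (hodd.1 hx), ← hv, hP.apply_Cyl_inter_two_steps,
      tsum_stepG'_mul_stepG'_prob v hx]
    simp only [retainedStep, hx]
  · rw [retainedPos_succ_of_even (Nat.not_odd_iff_even.1 (mt hodd.2 hx)), ← hv]
    have hcyl := hP.apply_Cyl_append v (.inl x) (.inl y)
    rw [Cyl_append_singleton _ (Sum.inl y), List.length_append, List.length_singleton] at hcyl
    rw [hcyl]
    cases hx' : turn x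
    · rw [stepG'_inl_p1 v hx', retainedStep, hx']
    · rw [stepG'_inl_p2 v hx', retainedStep, hx']
    · exact absurd hx' hx

lemma IsPlayMeasureFrom.map_retained (hsep : InteractionSeparated turn δ₁ δ₂ succ)
    (hP : IsPlayMeasureFrom (stepG' n turn δ₁ δ₂ succ f g σ π) (.inl s) P)
    {step : List S → S → S → ℝ≥0∞}
    (hstep : ∀ u x y, ∑' w : {w // IsLift turn s (u ++ [x]) w},
        P (Cyl w.1) * retainedStep turn δ₁ δ₂ succ f g σ π w.1 x y =
      (∑' w : {w // IsLift turn s (u ++ [x]) w}, P (Cyl w.1)) * step u x y) :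
    IsPlayMeasureFrom step s (P.map (retained (phase turn s))) := by
  have hlegal := hP.ae_isLegalPlay hsep
  have hmeas := measurable_retained (S := S) (n := n) (phase turn s)
  have := hP.1
  have := Measure.isProbabilityMeasure_map (μ := P) hmeas.aemeasurable
  refine .of_append ?_ fun u x y => ?_
  · rw [Measure.map_apply hmeas (measurableSet_Cyl _), ← mem_ae_iff_prob_eq_one
      (hmeas (measurableSet_Cyl _))]
    filter_upwards [hP.ae_zero_eq] with ρ h0
    simp [Cyl, retained, retainedPos_zero (phase_le_one turn s), h0, unbar]
  · have hnext : P (retained (phase turn s) ⁻¹' Cyl (u ++ [x] ++ [y])) =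
        P (retained (phase turn s) ⁻¹' Cyl (u ++ [x]) ∩
          {ρ | ρ (retainedPos (phase turn s) (u.length + 1)) = .inl y}) := by
      refine measure_congr (Filter.eventuallyEq_set.2 ?_)
      filter_upwards [hlegal] with ρ hρ
      simp [Cyl_append_singleton _ y, hρ.apply_retainedPos, -List.append_assoc]
    have htotal := measure_retained_preimage_Cyl_inter hlegal u x MeasurableSet.univ
    simp only [Set.inter_univ] at htotal
    rw [Measure.map_apply hmeas (measurableSet_Cyl _),
      Measure.map_apply hmeas (measurableSet_Cyl _), hnext,
      measure_retained_preimage_Cyl_inter hlegal u x (measurableSet_eval_eq _ _), htotal, ← hstep]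
    exact tsum_congr fun w => w.2.measure_Cyl_inter_next hP y

end RetainedStep

section Strategies

lemma exists_obsBased_extension {α A O ι : Type} (obs : α → O) (w : ι → List α) (p : ι → PMF A)
    (hp : ∀ i j, (w i).map obs = (w j).map obs → p i = p j) (d : PMF A) :
    ∃ σ : List α → PMF A, ObsBased obs σ ∧ (∀ i, σ (w i) = p i) ∧
      ∀ h, (∀ i, (w i).map obs ≠ h.map obs) → σ h = d :=
  ⟨fun h => Function.extend (fun i => (w i).map obs) p (fun _ => d) (h.map obs),
    fun _ _ hobs => congrArg _ hobs,
    fun i => Function.FactorsThrough.extend_apply (fun i j => hp i j) _ i,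
    fun _ hh => Function.extend_apply' _ _ _ fun ⟨i, hi⟩ => hh i hi⟩

variable {n : ℕ} {turn : S → Turn} {obs : S → O}

lemma exists_obsBased_lift [NeZero n] {f : A₁ → ZMod n} (hf : Function.Surjective f)
    {σ : List S → PMF A₁} (hσ : ObsBased obs σ) (turn : S → Turn) (s : S) :
    ∃ σ' : List (S' S n) → PMF A₁, ObsBased (obs' obs) σ' ∧
      (∀ h w, IsLift turn s h w → σ' w = σ h) ∧
      ∀ u x w i, IsLift turn s (u ++ [x]) w → turn x = Turn.prob →
        σ' (w ++ [.inr (x, i)]) = uniformAction hf := by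
  obtain ⟨σ', hobs, hlift, hdefault⟩ := exists_obsBased_extension (obs' obs)
    (fun p : {p : List S × List (S' S n) // IsLift turn s p.1 p.2} => p.1.2) (fun p => σ p.1.1)
    (fun p q hpq => hσ _ _ ((p.2.map_obs_eq_iff q.2 obs).1 hpq)) (uniformAction hf)
  refine ⟨σ', hobs, fun h w hw => hlift ⟨(h, w), hw⟩, fun u x w i hw hx => hdefault _ ?_⟩
  rintro ⟨⟨h', w'⟩, hw'⟩ hmap
  exact hw.length_ne_length_add_one hx hw' (by simpa using congrArg List.length hmap)

lemma exists_obsBased_descent {σ' : List (S' S n) → PMF A₁} (hσ' : ObsBased (obs' obs) σ')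
    (turn : S → Turn) (s : S) :
    ∃ σ : List S → PMF A₁, ObsBased obs σ ∧ ∀ h w, IsLift turn s h w → σ' w = σ h := by
  obtain ⟨σ, hobs, hlift, -⟩ := exists_obsBased_extension obs
    (fun p : {p : List S × List (S' S n) // IsLift turn s p.1 p.2} => p.1.1) (fun p => σ' p.1.2)
    (fun p q hpq => hσ' _ _ ((p.2.map_obs_eq_iff q.2 obs).2 hpq)) (σ' [])
  exact ⟨σ, hobs, fun h w hw => (hlift ⟨(h, w), hw⟩).symm⟩

lemma exists_strategy_lift [NeZero n] {g : A₂ → ZMod n} (hg : Function.Surjective g)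
    (π : List S → PMF A₂) (turn : S → Turn) (s : S) :
    ∃ π' : List (S' S n) → PMF A₂, ∀ u x w, IsLift turn s (u ++ [x]) w →
      π' w = if turn x = Turn.prob then uniformAction hg else π (u ++ [x]) := by
  obtain ⟨π', -, hlift, -⟩ := exists_obsBased_extension id
    (fun p : {p : (List S × S) × List (S' S n) // IsLift turn s (p.1.1 ++ [p.1.2]) p.2} => p.1.2)
    (fun p => if turn p.1.1.2 = Turn.prob then uniformAction hg else π (p.1.1.1 ++ [p.1.1.2]))
    (by
      rintro ⟨⟨⟨u, x⟩, w⟩, hw⟩ ⟨⟨⟨u', x'⟩, w'⟩, hw'⟩ hmap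
      obtain rfl : w = w' := by simpa using hmap
      obtain ⟨rfl, rfl⟩ := List.append_singleton_inj.1 (hw.history_unique hw')
      rfl) (uniformAction hg)
  exact ⟨π', fun u x w hw => hlift ⟨((u, x), w), hw⟩⟩

lemma exists_strategy_average [NeZero n] [MeasurableSpace S] [Countable S]
    [DiscreteMeasurableSpace S] (P : Measure (ℕ → S' S n)) [IsFiniteMeasure P]
    (π' : List (S' S n) → PMF A₂) (turn : S → Turn) (s : S) :
    ∃ π : List S → PMF A₂, ∀ h (d : A₂ → S) y,
      ∑' w : {w // IsLift turn s h w}, P (Cyl w.1) * (π' w.1).map d y =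
        (∑' w : {w // IsLift turn s h w}, P (Cyl w.1)) * (π h).map d y := by
  have : Nonempty A₂ := (π' []).support_nonempty.to_type
  choose π hπ using fun h => exists_pmf_mixture (B := S)
    (fun w : {w // IsLift turn s h w} => P (Cyl w.1)) (tsum_measure_Cyl_lift_ne_top turn s h)
    fun w => π' w.1
  exact ⟨π, hπ⟩

end Strategies

section Transfer

variable [DecidableEq S] [Fintype A₁] [Fintype A₂] [MeasurableSpace S] [Countable S]
  [DiscreteMeasurableSpace S] {n : ℕ} [NeZero n] {turn : S → Turn} {δ₁ : S → A₁ → S}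
  {δ₂ : S → A₂ → S} {succ : S → ZMod n → S} {f : A₁ → ZMod n} {g : A₂ → ZMod n} {s : S}
  {obs : S → O}

lemma exists_simulating_strategy (hsep : InteractionSeparated turn δ₁ δ₂ succ)
    (hf : Function.Surjective f) {σ : List S → PMF A₁} (hσ : ObsBased obs σ) (s : S) :
    ∃ σ' : List (S' S n) → PMF A₁, ObsBased (obs' obs) σ' ∧
      ∀ π' P', IsPlayMeasureFrom (stepG' n turn δ₁ δ₂ succ f g σ' π') (.inl s) P' →
        ∃ π, IsPlayMeasureFrom (stepG n turn δ₁ δ₂ succ σ π) s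
          (P'.map (retained (phase turn s))) := by
  obtain ⟨σ', hobs, hlift, huniform⟩ := exists_obsBased_lift hf hσ turn s
  refine ⟨σ', hobs, fun π' P' hP' => ?_⟩
  have := hP'.1
  obtain ⟨π, hπ⟩ := exists_strategy_average P' π' turn s
  refine ⟨π, hP'.map_retained hsep fun u x y => ?_⟩
  rcases hx : turn x
  · simp only [retainedStep, hx, stepG_p1 σ π u hx, hlift _ _ (Subtype.prop _),
      ENNReal.tsum_mul_right]
  · simp only [retainedStep, hx, stepG_p2 σ π u hx, hπ]
  · simp only [retainedStep, hx, stepG_prob σ π u hx, huniform u x _ _ (Subtype.prop _) hx,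
      map_add_left_uniformAction hf, PMF.bind_const, ENNReal.tsum_mul_right]

lemma exists_simulated_strategy (hsep : InteractionSeparated turn δ₁ δ₂ succ)
    (hg : Function.Surjective g) {σ' : List (S' S n) → PMF A₁} (hσ' : ObsBased (obs' obs) σ')
    (s : S) :
    ∃ σ : List S → PMF A₁, ObsBased obs σ ∧ ∀ π, ∃ π' : List (S' S n) → PMF A₂,
      ∀ P', IsPlayMeasureFrom (stepG' n turn δ₁ δ₂ succ f g σ' π') (.inl s) P' →
        IsPlayMeasureFrom (stepG n turn δ₁ δ₂ succ σ π) s (P'.map (retained (phase turn s))) := by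
  obtain ⟨σ, hobs, hlift⟩ := exists_obsBased_descent hσ' turn s
  refine ⟨σ, hobs, fun π => ?_⟩
  obtain ⟨π', hπ'⟩ := exists_strategy_lift hg π turn s
  refine ⟨π', fun P' hP' => hP'.map_retained hsep fun u x y => ?_⟩
  rcases hx : turn x
  · simp only [retainedStep, hx, stepG_p1 σ π u hx, hlift _ _ (Subtype.prop _),
      ENNReal.tsum_mul_right]
  · simp [retainedStep, hx, stepG_p2 σ π u hx, hπ' u x _ (Subtype.prop _), ENNReal.tsum_mul_right]
  · rw [← ENNReal.tsum_mul_right]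
    refine tsum_congr fun w => ?_
    -- Player 1 does not observe the index chosen by player 2.
    have hbar : ∀ i, σ' (w.1 ++ [.inr (x, i)]) = σ' (w.1 ++ [.inr (x, 0)]) := fun i =>
      hσ' _ _ (by simp [obs', unbar])
    simp only [retainedStep, hx, stepG_prob σ π u hx, hπ' u x w.1 w.2, if_true, hbar,
      bind_map_add_uniformAction hg]

theorem stmt_6_general (hsep : InteractionSeparated turn δ₁ δ₂ succ)
    (hf : Function.Surjective f) (hg : Function.Surjective g) {φ : Set (ℕ → S)}
    (hφ : MeasurableSet φ)
    {Pr : S → (List S → PMF A₁) → (List S → PMF A₂) → Measure (ℕ → S)}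
    (hPr : IsPlayMeasure (stepG n turn δ₁ δ₂ succ) Pr)
    {Pr' : S' S n → (List (S' S n) → PMF A₁) → (List (S' S n) → PMF A₂) → Measure (ℕ → S' S n)}
    (hPr' : IsPlayMeasure (stepG' n turn δ₁ δ₂ succ f g) Pr') (obs : S → O) (s : S)
    (W : ℝ≥0∞ → Prop) :
    (∃ σ, ObsBased obs σ ∧ ∀ π, W (Pr s σ π φ)) ↔
      ∃ σ', ObsBased (obs' obs) σ' ∧ ∀ π', W (Pr' (.inl s) σ' π' (phi' φ)) := by
  have hvalue : ∀ {σ π σ' π'}, IsPlayMeasureFrom (stepG n turn δ₁ δ₂ succ σ π) s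
      ((Pr' (.inl s) σ' π').map (retained (phase turn s))) →
      Pr' (.inl s) σ' π' (phi' φ) = Pr s σ π φ := fun {σ π σ' π'} hmap => by
    rw [measure_phi' ((hPr'.from (.inl s) σ' π').ae_isLegalPlay hsep) hφ,
      hmap.unique (hPr.from s σ π)]
  constructor
  · rintro ⟨σ, hσ, hwin⟩
    obtain ⟨σ', hσ', hsim⟩ := exists_simulating_strategy hsep hf hσ s
    refine ⟨σ', hσ', fun π' => ?_⟩
    obtain ⟨π, hπ⟩ := hsim π' _ (hPr'.from (.inl s) σ' π')
    exact hvalue hπ ▸ hwin π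
  · rintro ⟨σ', hσ', hwin⟩
    obtain ⟨σ, hσ, hsim⟩ := exists_simulated_strategy hsep hg hσ' s
    refine ⟨σ, hσ, fun π => ?_⟩
    obtain ⟨π', hπ'⟩ := hsim π
    exact hvalue (hπ' _ (hPr'.from (.inl s) σ' π')) ▸ hwin π'

end Transfer

theorem stmt_6 {S A₁ A₂ O : Type} [Fintype S] [Nonempty S] [DecidableEq S]
    [Fintype A₁] [Nonempty A₁] [Fintype A₂] [Nonempty A₂] [Fintype O]
    [MeasurableSpace S] [DiscreteMeasurableSpace S]
    (n : ℕ) [NeZero n]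
    (turn : S → Turn) (δ₁ : S → A₁ → S) (δ₂ : S → A₂ → S) (succ : S → ZMod n → S)
    (obs₁ : S → O)
    -- interaction separation: deterministic moves lead to probabilistic states and
    -- probabilistic states lead to player states
    (hδ₁ : ∀ s a, turn s = Turn.p1 → turn (δ₁ s a) = Turn.prob)
    (hδ₂ : ∀ s b, turn s = Turn.p2 → turn (δ₂ s b) = Turn.prob)
    (hsucc : ∀ s k, turn s = Turn.prob → turn (succ s k) ≠ Turn.prob)
    (f : A₁ → ZMod n) (g : A₂ → ZMod n)
    (hf : Function.Surjective f) (hg : Function.Surjective g)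
    (φ : Set (ℕ → S)) (hφ : MeasurableSet φ)
    (Pr : S → (List S → PMF A₁) → (List S → PMF A₂) → Measure (ℕ → S))
    (hPr : IsPlayMeasure (stepG n turn δ₁ δ₂ succ) Pr)
    (Pr' : S' S n → (List (S' S n) → PMF A₁) → (List (S' S n) → PMF A₂) →
      Measure (ℕ → S' S n))
    (hPr' : IsPlayMeasure (stepG' n turn δ₁ δ₂ succ f g) Pr')
    (s : S) :
    ((∃ σ : List S → PMF A₁, ObsBased obs₁ σ ∧
        ∀ π : List S → PMF A₂, Pr s σ π φ = 1) ↔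
      (∃ σ : List (S' S n) → PMF A₁, ObsBased (obs' obs₁) σ ∧
        ∀ π : List (S' S n) → PMF A₂, Pr' (Sum.inl s) σ π (phi' φ) = 1)) ∧
    ((∃ σ : List S → PMF A₁, ObsBased obs₁ σ ∧
        ∀ π : List S → PMF A₂, 0 < Pr s σ π φ) ↔
      (∃ σ : List (S' S n) → PMF A₁, ObsBased (obs' obs₁) σ ∧
        ∀ π : List (S' S n) → PMF A₂, 0 < Pr' (Sum.inl s) σ π (phi' φ))) := by
  have hsep : InteractionSeparated turn δ₁ δ₂ succ := ⟨hδ₁, hδ₂, hsucc⟩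
  exact ⟨stmt_6_general hsep hf hg hφ hPr hPr' obs₁ s (· = 1),
    stmt_6_general hsep hf hg hφ hPr hPr' obs₁ s (0 < ·)⟩

end Stmt6
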